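/- arXiv:2402.13893 — 2 statements merged into one kernel-verified Lean document; each statement's English description precedes it below -/
import Mathlib

section
/- Let n ≥ 2 and let λ ∈ ℝ^n satisfy λ_1 ≥ … ≥ λ_n, λ_1+…+λ_n = 0 and λ ≠ 0. Then 0 ∈ C_2(O_λ) if and only if λ is self-dual, i.e. λ_i = −λ_{n+1−i} for all 1 ≤ i ≤ n. -/
/-- The `r`-th partial convex hull of a set `X`: the union of the convex hulls of all
`r`-tuples of points of `X`. -/
def partialConvexHull {E : Type*} [AddCommGroup E] [Module ℝ E]
    (r : ℕ) (X : Set E) : Set E :=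
  {y | ∃ f : Fin r → E, (∀ i, f i ∈ X) ∧ y ∈ convexHull ℝ (Set.range f)}

/-- The coadjoint orbit `O_λ` of `SU(n)`: the set of `n × n` complex Hermitian matrices
of trace zero whose eigenvalues, listed with multiplicity, are the entries of `lam`. -/
def coadjointOrbit {n : ℕ} (lam : Fin n → ℝ) : Set (Matrix (Fin n) (Fin n) ℂ) :=
  {A | A.trace = 0 ∧ ∃ hA : A.IsHermitian, ∃ σ : Equiv.Perm (Fin n),
      ∀ i, hA.eigenvalues (σ i) = lam i}

/-!
The orbit `O_λ` lies on a sphere for the operator norm, because the norm of a Hermitian matrix is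
its spectral radius. If `0 = a • A + b • B` is a convex combination of two points of the orbit, then
`a • A = -(b • B)` forces `a = b` on comparing norms, hence `B = -A` (or `A = B = 0`). As `-A` has
eigenvalues `-λ`, this happens exactly when `-λ` is a rearrangement of `λ`, and the decreasing
rearrangement of `-λ` is `i ↦ -λ (rev i)`.
-/

open Matrix Polynomial

section ConvexHull

variable {E : Type*}

theorem mem_partialConvexHull_two [AddCommGroup E] [Module ℝ E] {X : Set E} {y : E} :
    y ∈ partialConvexHull 2 X ↔ ∃ x ∈ X, ∃ z ∈ X, y ∈ segment ℝ x z := by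
  simp [partialConvexHull, Fin.exists_fin_succ_pi, Fin.forall_fin_two, convexHull_pair, and_assoc]

theorem zero_mem_segment_iff_eq_neg_of_norm_eq [NormedAddCommGroup E] [NormedSpace ℝ E] {x y : E}
    (hxy : ‖x‖ = ‖y‖) : 0 ∈ segment ℝ x y ↔ y = -x := by
  constructor
  · rintro ⟨a, b, ha, hb, hab, h⟩
    have hnorm : a * ‖y‖ = b * ‖y‖ := by
      have := congrArg norm (eq_neg_of_add_eq_zero_left h)
      rwa [norm_neg, norm_smul_of_nonneg ha, norm_smul_of_nonneg hb, hxy] at this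
    rcases mul_eq_mul_right_iff.mp hnorm with rfl | hy
    · have ha0 : a ≠ 0 := by linarith
      rw [← smul_add, smul_eq_zero_iff_right ha0] at h
      exact eq_neg_of_add_eq_zero_right h
    · rw [norm_eq_zero.mp (hxy.trans hy), norm_eq_zero.mp hy, neg_zero]
  · rintro rfl
    exact ⟨1 / 2, 1 / 2, by norm_num, by norm_num, by norm_num, by simp⟩

theorem zero_mem_partialConvexHull_two_iff_exists_neg_mem [NormedAddCommGroup E]
    [NormedSpace ℝ E] {X : Set E} (hX : ∀ x ∈ X, ∀ y ∈ X, ‖x‖ = ‖y‖) :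
    0 ∈ partialConvexHull 2 X ↔ ∃ x ∈ X, -x ∈ X := by
  rw [mem_partialConvexHull_two]
  refine exists_congr fun x ↦ and_congr_right fun hx ↦ ⟨?_, fun hneg ↦ ⟨-x, hneg, ?_⟩⟩
  · rintro ⟨y, hy, h⟩
    rwa [← (zero_mem_segment_iff_eq_neg_of_norm_eq (hX x hx y hy)).mp h]
  · exact (zero_mem_segment_iff_eq_neg_of_norm_eq (norm_neg x).symm).mpr rfl

end ConvexHull

theorem exists_equiv_comp_eq_of_map_univ_val_eq {ι κ α : Type*} [Fintype ι] [Fintype κ]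
    {f : ι → α} {g : κ → α} (h : Finset.univ.val.map f = Finset.univ.val.map g) :
    ∃ e : κ ≃ ι, f ∘ e = g := by
  classical
  have hcard (a : α) : Fintype.card {k // g k = a} = Fintype.card {i // f i = a} := by
    simpa [Multiset.count_map, Fintype.card_subtype, Finset.card_def, eq_comm] using
      congrArg (Multiset.count a) h.symm
  exact ⟨Equiv.ofFiberEquiv fun a ↦ Fintype.equivOfCardEq (hcard a),
    funext (Equiv.ofFiberEquiv_map _)⟩

section Polynomial

variable {R ι κ : Type*} [CommRing R] [IsDomain R] [Fintype ι] [Fintype κ]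

theorem roots_prod_univ_X_sub_C (f : ι → R) :
    (∏ i, (X - C (f i))).roots = Finset.univ.val.map f := by
  rw [← roots_multiset_prod_X_sub_C (Finset.univ.val.map f), Multiset.map_map]
  rfl

theorem prod_X_sub_C_eq_prod_X_sub_C_iff {f : ι → R} {g : κ → R} :
    ∏ i, (X - C (f i)) = ∏ k, (X - C (g k)) ↔ ∃ e : κ ≃ ι, f ∘ e = g := by
  constructor
  · intro h
    apply exists_equiv_comp_eq_of_map_univ_val_eq
    rw [← roots_prod_univ_X_sub_C, h, roots_prod_univ_X_sub_C]
  · rintro ⟨e, rfl⟩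
    exact (Equiv.prod_comp e fun i ↦ X - C (f i)).symm

end Polynomial

theorem exists_comp_eq_neg_iff_of_antitone {α : Type*} [AddCommGroup α] [PartialOrder α]
    [IsOrderedAddMonoid α] {n : ℕ} {f : Fin n → α} (hf : Antitone f) :
    (∃ σ : Equiv.Perm (Fin n), f ∘ σ = -f) ↔ ∀ i, f i = -f i.rev := by
  constructor
  · rintro ⟨σ, hσ⟩ i
    have hrev : f ∘ (Fin.revPerm.trans σ) = fun i ↦ -f i.rev := by
      ext i
      simpa using congrFun hσ i.rev
    have hanti : Antitone (f ∘ (Fin.revPerm.trans σ)) := by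
      rw [hrev]
      exact fun i j hij ↦ neg_le_neg (hf (Fin.rev_le_rev.mpr hij))
    exact congrFun ((Tuple.unique_antitone (σ := Equiv.refl _) hf hanti).trans hrev) i
  · intro h
    exact ⟨Fin.revPerm, funext fun i ↦ by simp [h i]⟩

theorem charpoly_neg {R m : Type*} [CommRing R] [Fintype m] [DecidableEq m] (M : Matrix m m R) :
    (-M).charpoly = (-1) ^ Fintype.card m * M.charpoly.comp (-X) := by
  have hmatrix : (-M).charmatrix = -(compRingHom (-X)).mapMatrix M.charmatrix := by
    ext1 i j
    by_cases hij : i = j <;> simp [hij, add_comm]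
  rw [Matrix.charpoly, hmatrix, det_neg, ← RingHom.map_det, coe_compRingHom_apply, Matrix.charpoly]

section CoadjointOrbit

variable {n : ℕ} {lam mu : Fin n → ℝ} {A B : Matrix (Fin n) (Fin n) ℂ}

theorem mem_coadjointOrbit_iff_charpoly_eq :
    A ∈ coadjointOrbit lam ↔
      A.trace = 0 ∧ A.IsHermitian ∧ A.charpoly = ∏ i, (X - C (lam i : ℂ)) := by
  have hperm (hA : A.IsHermitian) :
      A.charpoly = ∏ i, (X - C (lam i : ℂ)) ↔
        ∃ σ : Equiv.Perm (Fin n), ∀ i, hA.eigenvalues (σ i) = lam i := by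
    simp [hA.charpoly_eq, prod_X_sub_C_eq_prod_X_sub_C_iff, funext_iff]
  rw [← exists_prop (a := A.IsHermitian), exists_congr hperm]
  rfl

theorem spectrum_real_eq_range_of_mem_coadjointOrbit (hA : A ∈ coadjointOrbit lam) :
    spectrum ℝ A = Set.range lam := by
  obtain ⟨-, hherm, σ, hσ⟩ := hA
  rw [hherm.spectrum_real_eq_range_eigenvalues, ← σ.surjective.range_comp]
  exact congrArg Set.range (funext hσ)

open scoped Matrix.Norms.L2Operator in
theorem norm_eq_of_mem_coadjointOrbit (hA : A ∈ coadjointOrbit lam)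
    (hB : B ∈ coadjointOrbit lam) : ‖A‖ = ‖B‖ := by
  have hradius : spectralRadius ℝ A = spectralRadius ℝ B := by
    simp only [spectralRadius, spectrum_real_eq_range_of_mem_coadjointOrbit hA,
      spectrum_real_eq_range_of_mem_coadjointOrbit hB]
  obtain ⟨-, hermA, -⟩ := hA
  obtain ⟨-, hermB, -⟩ := hB
  rw [← IsSelfAdjoint.toReal_spectralRadius_eq_norm hermA, hradius,
    IsSelfAdjoint.toReal_spectralRadius_eq_norm hermB]

theorem coadjointOrbit_comp_perm (σ : Equiv.Perm (Fin n)) :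
    coadjointOrbit (lam ∘ σ) = coadjointOrbit lam := by
  ext A
  simp [mem_coadjointOrbit_iff_charpoly_eq, Equiv.prod_comp σ fun i ↦ X - C (lam i : ℂ)]

theorem exists_perm_of_mem_coadjointOrbit (hlam : A ∈ coadjointOrbit lam)
    (hmu : A ∈ coadjointOrbit mu) : ∃ σ : Equiv.Perm (Fin n), lam ∘ σ = mu := by
  obtain ⟨-, -, hlam⟩ := mem_coadjointOrbit_iff_charpoly_eq.mp hlam
  obtain ⟨-, -, hmu⟩ := mem_coadjointOrbit_iff_charpoly_eq.mp hmu
  obtain ⟨σ, hσ⟩ := prod_X_sub_C_eq_prod_X_sub_C_iff.mp (hlam.symm.trans hmu)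
  exact ⟨σ, funext fun i ↦ Complex.ofReal_injective (congrFun hσ i)⟩

theorem neg_mem_coadjointOrbit_neg (hA : A ∈ coadjointOrbit lam) :
    -A ∈ coadjointOrbit (-lam) := by
  obtain ⟨htrace, hherm, hcharpoly⟩ := mem_coadjointOrbit_iff_charpoly_eq.mp hA
  refine mem_coadjointOrbit_iff_charpoly_eq.mpr ⟨by simp [htrace], hherm.neg, ?_⟩
  calc (-A).charpoly = (-1) ^ n * ∏ i, (-X - C (lam i : ℂ)) := by
        simp [charpoly_neg, hcharpoly, prod_comp]
    _ = ∏ i, -(-X - C (lam i : ℂ)) := by simp only [Finset.prod_neg, Finset.card_fin]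
    _ = ∏ i, (X - C ((-lam) i : ℂ)) := by simp [add_comm]

theorem diagonal_mem_coadjointOrbit (hsum : ∑ i, lam i = 0) :
    diagonal (fun i ↦ (lam i : ℂ)) ∈ coadjointOrbit lam := by
  refine mem_coadjointOrbit_iff_charpoly_eq.mpr ⟨?_, ?_, charpoly_diagonal _⟩
  · rw [trace_diagonal]
    exact_mod_cast hsum
  · exact isHermitian_diagonal_iff.mpr fun i ↦ Complex.conj_ofReal (lam i)

theorem exists_neg_mem_coadjointOrbit_iff :
    (∃ A ∈ coadjointOrbit lam, -A ∈ coadjointOrbit lam) ↔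
      ∃ σ : Equiv.Perm (Fin n), lam ∘ σ = -lam := by
  constructor
  · rintro ⟨A, hA, hneg⟩
    exact exists_perm_of_mem_coadjointOrbit hneg (neg_mem_coadjointOrbit_neg hA)
  · rintro ⟨σ, hσ⟩
    have hsum : ∑ i, lam i = 0 := by
      have : ∑ i, lam i = -∑ i, lam i := by
        rw [← Finset.sum_neg_distrib, ← Equiv.sum_comp σ]
        exact congrArg (fun f ↦ ∑ i, f i) hσ
      linarith
    have hdiag := diagonal_mem_coadjointOrbit hsum
    refine ⟨_, hdiag, ?_⟩
    rw [← coadjointOrbit_comp_perm σ, hσ]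
    exact neg_mem_coadjointOrbit_neg hdiag

theorem zero_mem_partialConvexHull_two_coadjointOrbit_iff :
    0 ∈ partialConvexHull 2 (coadjointOrbit lam) ↔
      ∃ σ : Equiv.Perm (Fin n), lam ∘ σ = -lam :=
  open scoped Matrix.Norms.L2Operator in
  (zero_mem_partialConvexHull_two_iff_exists_neg_mem
    fun _ hA _ hB ↦ norm_eq_of_mem_coadjointOrbit hA hB).trans exists_neg_mem_coadjointOrbit_iff

end CoadjointOrbit

/-- For decreasing trace-free `λ ≠ 0`, `0 ∈ C_2(O_λ)` iff `λ` is self-dual,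
i.e. `λ_i = -λ_{n+1-i}` for all `i`. -/
theorem zero_mem_partialConvexHull_two_iff_selfDual (n : ℕ) (hn : 2 ≤ n)
    (lam : Fin n → ℝ) (hmono : Antitone lam) (hsum : ∑ i, lam i = 0)
    (hne : lam ≠ 0) :
    (0 : Matrix (Fin n) (Fin n) ℂ) ∈ partialConvexHull 2 (coadjointOrbit lam) ↔
      ∀ i : Fin n, lam i = -lam i.rev :=
  zero_mem_partialConvexHull_two_coadjointOrbit_iff.trans (exists_comp_eq_neg_iff_of_antitone hmono)
end

section
/- Let n ≥ 2 and 1 ≤ j ≤ n−1, and let μ(n,j) ∈ ℝ^n be the vector whose first j coordinates equal 1 − j/n and whose remaining n−j coordinates equal −j/n (the j-th fundamental weight of SU(n)). Then the minimal integer r ≥ 1 such that C_r(O_{μ(n,j)}) is a convex set equals n + 1 − min(j, n−j). -/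
/-!
Adding `(j / n) • 1` to a matrix of the orbit gives an orthogonal projection of rank `j`, so the
question is about the Grassmannian of such projections, whose convex hull is the Fantope
`{A | 0 ≤ A ≤ 1, tr A = j}`.

For the upper bound, a point `A` of the Fantope is written as `t P + (1 - t) B` with `P` a
projection of rank `j` and `B` in the Fantope, so that whichever of the excesses `rank A - j` and
`rank (1 - A) - (n - j)` is larger drops, and both drop when they are equal; a point without
excess is a projection. After diagonalizing `A`, one takes for `P` the projection onto the span of
`j - 1` coordinate vectors and of one more vector, supported on at most two further coordinates.

For the lower bound, take `A` with eigenvalue `1` of multiplicity `j - 1` and the other `n - j + 1`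
eigenvalues equal. All projections in a convex combination equal to `A` fix its `1`-eigenspace,
hence each contributes only rank one to the complement, and at least `n - j + 1` of them are needed.
Replacing `P` by `1 - P` exchanges `j` and `n - j`.
-/

open Finset Matrix Unitary
open scoped ComplexOrder MatrixOrder

section PartialConvexHull

variable {E F : Type*} [AddCommGroup E] [Module ℝ E] [AddCommGroup F] [Module ℝ F]
  {X : Set E} {Y : Set F} {r s : ℕ} {x y : E}

lemma mem_convexHull_range_iff {κ : Type*} [Fintype κ] {f : κ → E} :
    y ∈ convexHull ℝ (Set.range f) ↔ ∃ w ∈ stdSimplex ℝ κ, ∑ i, w i • f i = y := by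
  classical
  constructor
  · rw [convexHull_range_eq_exists_affineCombination]
    rintro ⟨s, w, hw0, hw1, rfl⟩
    refine ⟨fun i => if i ∈ s then w i else 0, ⟨fun i => ?_, by simp [hw1]⟩, ?_⟩
    · by_cases hi : i ∈ s <;> simp [hi, hw0]
    · simp [s.affineCombination_eq_linear_combination f w hw1, ite_smul]
  · rintro ⟨w, hw, rfl⟩
    exact mem_convexHull_of_exists_fintype w f hw.1 hw.2 (fun i => ⟨i, rfl⟩) rfl

lemma mem_partialConvexHull_iff :
    y ∈ partialConvexHull r X ↔
      ∃ f : Fin r → E, (∀ i, f i ∈ X) ∧ ∃ w ∈ stdSimplex ℝ (Fin r), ∑ i, w i • f i = y := by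
  simp only [partialConvexHull, Set.mem_ofPred_eq, mem_convexHull_range_iff]

lemma partialConvexHull_subset_convexHull : partialConvexHull r X ⊆ convexHull ℝ X := by
  rintro y ⟨f, hf, hy⟩
  exact convexHull_mono (Set.range_subset_iff.2 hf) hy

lemma subset_partialConvexHull (hr : 1 ≤ r) : X ⊆ partialConvexHull r X :=
  fun x hx => ⟨fun _ => x, fun _ => hx, subset_convexHull ℝ _ ⟨⟨0, hr⟩, rfl⟩⟩

lemma partialConvexHull_mono (hrs : r ≤ s) : partialConvexHull r X ⊆ partialConvexHull s X := by
  rintro y ⟨f, hf, hy⟩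
  obtain ⟨_, i, rfl⟩ := convexHull_nonempty_iff.1 ⟨y, hy⟩
  refine ⟨fun k => if h : k < r then f ⟨k, h⟩ else f i, fun k => ?_, convexHull_mono ?_ hy⟩
  · dsimp only
    split_ifs <;> exact hf _
  · rintro _ ⟨k, rfl⟩
    exact ⟨k.castLE hrs, by simp⟩

lemma mem_partialConvexHull_succ_of_mem_segment {z : E} (hx : x ∈ X)
    (hy : y ∈ partialConvexHull r X) (hz : z ∈ segment ℝ x y) :
    z ∈ partialConvexHull (r + 1) X := by
  obtain ⟨f, hf, hy⟩ := hy
  refine ⟨Fin.cons x f, Fin.cases hx hf, (convex_convexHull ℝ _).segment_subset ?_ ?_ hz⟩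
  · exact subset_convexHull ℝ _ (Set.mem_range_self 0)
  · rw [Fin.range_cons]
    exact convexHull_mono (Set.subset_insert _ _) hy

lemma mapsTo_partialConvexHull (φ : E →ᵃ[ℝ] F) (hφ : Set.MapsTo φ X Y) :
    Set.MapsTo φ (partialConvexHull r X) (partialConvexHull r Y) := by
  rintro y ⟨f, hf, hy⟩
  refine ⟨φ ∘ f, fun i => hφ (hf i), ?_⟩
  rw [Set.range_comp, ← φ.image_convexHull]
  exact Set.mem_image_of_mem φ hy

lemma partialConvexHull_image (φ : E →ᵃ[ℝ] F) :
    partialConvexHull r (φ '' X) = φ '' partialConvexHull r X := by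
  refine Set.Subset.antisymm ?_ (mapsTo_partialConvexHull φ (Set.mapsTo_image φ X)).image_subset
  rintro y ⟨f, hf, hy⟩
  choose g hg hgf using hf
  obtain rfl : φ ∘ g = f := funext hgf
  rw [Set.range_comp, ← φ.image_convexHull] at hy
  obtain ⟨x, hx, rfl⟩ := hy
  exact ⟨x, ⟨g, hg, hx⟩, rfl⟩

open scoped Pointwise in
lemma partialConvexHull_vadd (v : E) : partialConvexHull r (v +ᵥ X) = v +ᵥ partialConvexHull r X :=
  partialConvexHull_image (AffineEquiv.constVAdd ℝ E v).toAffineMap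

lemma convex_partialConvexHull_iff (hr : 1 ≤ r) :
    Convex ℝ (partialConvexHull r X) ↔ convexHull ℝ X ⊆ partialConvexHull r X := by
  refine ⟨convexHull_min (subset_partialConvexHull hr), fun h => ?_⟩
  rw [partialConvexHull_subset_convexHull.antisymm h]
  exact convex_convexHull ℝ X

end PartialConvexHull

section Rank

variable {𝕜 ι κ : Type*} [Field 𝕜] [Fintype ι]

lemma trace_eq_rank_of_isIdempotentElem {P : Matrix ι ι 𝕜} (hP : IsIdempotentElem P) :
    P.trace = P.rank := by
  classical
  have h := (LinearMap.IsIdempotentElem.isProj_range (toLin' P) ?_).trace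
  · rwa [Matrix.trace_toLin'_eq] at h
  · rw [IsIdempotentElem, Module.End.mul_eq_comp, ← toLin'_mul, hP.eq]

lemma rank_add_le (A B : Matrix κ ι 𝕜) : (A + B).rank ≤ A.rank + B.rank := by
  have h : (A + B).mulVecLin.range ≤ A.mulVecLin.range ⊔ B.mulVecLin.range := by
    rintro _ ⟨x, rfl⟩
    rw [mulVecLin_add]
    exact Submodule.add_mem_sup ⟨x, rfl⟩ ⟨x, rfl⟩
  exact (Submodule.finrank_mono h).trans (Submodule.finrank_add_le_finrank_add_finrank _ _)

lemma rank_sum_le {α : Type*} (s : Finset α) (A : α → Matrix κ ι 𝕜) :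
    (∑ k ∈ s, A k).rank ≤ ∑ k ∈ s, (A k).rank :=
  Finset.le_sum_of_subadditive _ rank_zero.le rank_add_le s A

end Rank

section Loewner

variable {𝕜 ι : Type*} [RCLike 𝕜] [Fintype ι] {A B P X Y : Matrix ι ι 𝕜} {u v x : ι → 𝕜}

lemma mulVec_eq_zero_of_smul_le {c : ℝ} (hc : 0 < c) (hX : 0 ≤ X) (h : c • X ≤ Y)
    (hv : Y *ᵥ v = 0) : X *ᵥ v = 0 := by
  have hX' := nonneg_iff_posSemidef.1 hX
  rw [← hX'.dotProduct_mulVec_zero_iff]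
  refine le_antisymm ?_ (hX'.dotProduct_mulVec_nonneg v)
  have hYX := (le_iff.1 h).dotProduct_mulVec_nonneg v
  rw [sub_mulVec, hv, zero_sub, smul_mulVec, dotProduct_neg, dotProduct_smul, neg_nonneg] at hYX
  exact nonpos_of_smul_nonpos_of_pos_left hYX hc

lemma rank_le_of_mulVec_eq_zero_imp (h : ∀ v, A *ᵥ v = 0 → B *ᵥ v = 0) : B.rank ≤ A.rank := by
  have hle := Submodule.finrank_mono (s := A.mulVecLin.ker) (t := B.mulVecLin.ker) h
  have hA := A.mulVecLin.finrank_range_add_finrank_ker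
  have hB := B.mulVecLin.finrank_range_add_finrank_ker
  rw [Matrix.rank, Matrix.rank]
  omega

lemma rank_lt_of_mulVec_eq_zero_imp (h : ∀ v, A *ᵥ v = 0 → B *ᵥ v = 0)
    (hB : B *ᵥ x = 0) (hA : A *ᵥ x ≠ 0) : B.rank < A.rank := by
  have hlt : A.mulVecLin.ker < B.mulVecLin.ker :=
    SetLike.lt_iff_le_and_exists.2 ⟨h, x, hB, hA⟩
  have hle := Submodule.finrank_lt_finrank_of_lt hlt
  have hA := A.mulVecLin.finrank_range_add_finrank_ker
  have hB := B.mulVecLin.finrank_range_add_finrank_ker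
  rw [Matrix.rank, Matrix.rank]
  omega

lemma sub_smul_vecMulVec_mulVec {t : ℝ} (hAx : A *ᵥ x = u) (ht : t • (star u ⬝ᵥ x) = 1) :
    (A - t • vecMulVec u (star u)) *ᵥ x = 0 := by
  rw [sub_mulVec, hAx, smul_mulVec, vecMulVec_mulVec, op_smul_eq_smul, ← smul_assoc, ht, one_smul,
    sub_self]

/-- `A - t u u* = (1 - t x u*)* A (1 - t x u*)`, a conjugate of a nonnegative matrix. -/
lemma smul_vecMulVec_le {t : ℝ} (hA : 0 ≤ A) (hAx : A *ᵥ x = u) (ht : t • (star u ⬝ᵥ x) = 1) :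
    t • vecMulVec u (star u) ≤ A := by
  classical
  have hAu : A * (1 - t • vecMulVec x (star u)) = A - t • vecMulVec u (star u) := by
    rw [mul_sub, mul_one, mul_smul_comm, mul_vecMulVec, hAx]
  have hx : star x ᵥ* (A - t • vecMulVec u (star u)) = 0 := by
    have hH : star (A - t • vecMulVec u (star u)) = A - t • vecMulVec u (star u) := by
      rw [star_sub, star_smul, star_trivial t, (IsSelfAdjoint.of_nonneg hA).star_eq,
        star_eq_conjTranspose, conjTranspose_vecMulVec, star_star]
    rw [← hH, star_eq_conjTranspose, ← star_mulVec, sub_smul_vecMulVec_mulVec hAx ht, star_zero]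
  have hconj := star_left_conjugate_nonneg hA (1 - t • vecMulVec x (star u))
  rwa [mul_assoc, hAu, star_sub, star_one, star_smul, star_trivial t, star_eq_conjTranspose,
    conjTranspose_vecMulVec, star_star, sub_mul, one_mul, smul_mul_assoc, vecMulVec_mul, hx,
    vecMulVec_zero, smul_zero, sub_zero, sub_nonneg] at hconj

end Loewner

section Grassmannian

variable (𝕜 ι : Type*) [RCLike 𝕜] [Fintype ι]

/-- The Grassmannian of `j`-dimensional subspaces of `𝕜^ι`, each subspace being encoded by the
orthogonal projection onto it and its dimension by the trace of that projection. -/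
def grassmannian (j : ℕ) : Set (Matrix ι ι 𝕜) :=
  {P | IsStarProjection P ∧ P.trace = j}

variable [DecidableEq ι]

/-- The Fantope: the matrices of trace `j` between `0` and `1` in the Loewner order. It turns out to
be the convex hull of `grassmannian 𝕜 ι j`. -/
def fantope (j : ℕ) : Set (Matrix ι ι 𝕜) :=
  {A | A ∈ Set.Icc 0 1 ∧ A.trace = j}

variable {𝕜 ι} {A P : Matrix ι ι 𝕜} {j r : ℕ}

lemma convex_fantope : Convex ℝ (fantope 𝕜 ι j) := by
  refine fun A hA B hB s t hs ht hst => ⟨convex_Icc _ _ hA.1 hB.1 hs ht hst, ?_⟩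
  rw [trace_add, trace_smul, trace_smul, hA.2, hB.2, ← add_smul, hst, one_smul]

lemma grassmannian_subset_fantope : grassmannian 𝕜 ι j ⊆ fantope 𝕜 ι j :=
  fun _ hP => ⟨hP.1.mem_Icc, hP.2⟩

lemma trace_one_sub (hj : j ≤ Fintype.card ι) (hA : A.trace = j) :
    (1 - A).trace = (Fintype.card ι - j : ℕ) := by
  rw [trace_sub, trace_one, hA, Nat.cast_sub hj]

lemma one_sub_mem_grassmannian (hj : j ≤ Fintype.card ι) (hP : P ∈ grassmannian 𝕜 ι j) :
    1 - P ∈ grassmannian 𝕜 ι (Fintype.card ι - j) :=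
  ⟨hP.1.one_sub, trace_one_sub hj hP.2⟩

lemma one_sub_mem_fantope (hj : j ≤ Fintype.card ι) (hA : A ∈ fantope 𝕜 ι j) :
    1 - A ∈ fantope 𝕜 ι (Fintype.card ι - j) :=
  ⟨⟨sub_nonneg.2 hA.1.2, sub_le_self 1 hA.1.1⟩, trace_one_sub hj hA.2⟩

lemma one_sub_mem_partialConvexHull_grassmannian (hj : j ≤ Fintype.card ι)
    (hA : A ∈ partialConvexHull r (grassmannian 𝕜 ι j)) :
    1 - A ∈ partialConvexHull r (grassmannian 𝕜 ι (Fintype.card ι - j)) :=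
  mapsTo_partialConvexHull (AffineEquiv.constVSub ℝ (1 : Matrix ι ι 𝕜)).toAffineMap
    (fun _ => one_sub_mem_grassmannian hj) hA

section Conjugation

variable (U : unitary (Matrix ι ι 𝕜))

lemma trace_conjStarAlgAut : (conjStarAlgAut 𝕜 _ U A).trace = A.trace := by
  rw [conjStarAlgAut_apply, trace_mul_cycle, coe_star_mul_self, one_mul]

lemma rank_conjStarAlgAut : (conjStarAlgAut 𝕜 _ U A).rank = A.rank := by
  have hU : IsUnit (U : Matrix ι ι 𝕜).det := (isUnit_iff_isUnit_det _).1 isUnit_coe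
  have hU' : IsUnit (star (U : Matrix ι ι 𝕜)).det :=
    (isUnit_iff_isUnit_det _).1 (isUnit_coe (U := star U))
  rw [conjStarAlgAut_apply, rank_mul_eq_left_of_isUnit_det _ _ hU',
    rank_mul_eq_right_of_isUnit_det _ _ hU]

lemma conjStarAlgAut_mem_fantope_iff :
    conjStarAlgAut 𝕜 _ U A ∈ fantope 𝕜 ι j ↔ A ∈ fantope 𝕜 ι j := by
  have h0 := map_le_map_iff (conjStarAlgAut 𝕜 _ U) (a := 0) (b := A)
  have h1 := map_le_map_iff (conjStarAlgAut 𝕜 _ U) (a := A) (b := 1)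
  rw [map_zero] at h0
  rw [map_one] at h1
  simp only [fantope, Set.mem_ofPred_eq, trace_conjStarAlgAut, Set.mem_Icc, h0, h1]

lemma conjStarAlgAut_mem_grassmannian (hP : P ∈ grassmannian 𝕜 ι j) :
    conjStarAlgAut 𝕜 _ U P ∈ grassmannian 𝕜 ι j :=
  ⟨hP.1.map _, (trace_conjStarAlgAut U).trans hP.2⟩

end Conjugation

end Grassmannian

section RealDiagonal

variable (𝕜 : Type*) {ι : Type*} [RCLike 𝕜] [DecidableEq ι]

/-- The real diagonal matrices, viewed over `𝕜`; an algebra homomorphism in the diagonal. -/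
def realDiagonal [Fintype ι] : (ι → ℝ) →ₐ[ℝ] Matrix ι ι 𝕜 :=
  (diagonalAlgHom ℝ).comp ((Algebra.ofId ℝ 𝕜).compLeft ι)

variable {𝕜} [Fintype ι] {A : Matrix ι ι 𝕜} {a b : ι → ℝ} {j : ℕ}

lemma realDiagonal_eq_diagonal : realDiagonal 𝕜 a = diagonal fun i => (a i : 𝕜) :=
  rfl

lemma realDiagonal_le_iff : realDiagonal 𝕜 a ≤ realDiagonal 𝕜 b ↔ a ≤ b := by
  rw [le_iff, ← map_sub, realDiagonal_eq_diagonal, posSemidef_diagonal_iff, Pi.le_def]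
  simp only [Pi.sub_apply, RCLike.ofReal_nonneg, sub_nonneg]

lemma trace_realDiagonal : (realDiagonal 𝕜 a).trace = ((∑ i, a i : ℝ) : 𝕜) := by
  rw [realDiagonal_eq_diagonal, trace_diagonal, RCLike.ofReal_sum]

lemma rank_realDiagonal : (realDiagonal 𝕜 a).rank = #{i | a i ≠ 0} := by
  rw [realDiagonal_eq_diagonal, rank_diagonal, Fintype.card_subtype]
  simp only [ne_eq, RCLike.ofReal_eq_zero]

lemma rank_one_sub_realDiagonal : (1 - realDiagonal 𝕜 a).rank = #{i | a i ≠ 1} := by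
  rw [← map_one (realDiagonal 𝕜), ← map_sub, rank_realDiagonal]
  exact congrArg card (filter_congr fun i _ => sub_ne_zero.trans ne_comm)

lemma realDiagonal_mulVec (x : ι → 𝕜) : realDiagonal 𝕜 a *ᵥ x = fun i => (a i : 𝕜) * x i :=
  funext (mulVec_diagonal _ x)

lemma realDiagonal_mem_fantope_iff :
    realDiagonal 𝕜 a ∈ fantope 𝕜 ι j ↔ a ∈ Set.Icc 0 1 ∧ ∑ i, a i = j := by
  simp only [fantope, Set.mem_ofPred_eq, Set.mem_Icc]
  rw [← map_zero (realDiagonal 𝕜), ← map_one (realDiagonal 𝕜), realDiagonal_le_iff,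
    realDiagonal_le_iff, trace_realDiagonal, ← RCLike.ofReal_natCast, RCLike.ofReal_inj]

lemma isSelfAdjoint_realDiagonal : IsSelfAdjoint (realDiagonal 𝕜 a) := by
  rw [IsSelfAdjoint, star_eq_conjTranspose, realDiagonal_eq_diagonal, diagonal_conjTranspose]
  congr 1
  exact funext fun i => RCLike.conj_ofReal _

lemma isStarProjection_realDiagonal_iff :
    IsStarProjection (realDiagonal 𝕜 a) ↔ ∀ i, a i = 0 ∨ a i = 1 := by
  have hidem : realDiagonal 𝕜 (a * a) = realDiagonal 𝕜 a ↔ a * a = a := by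
    simp only [le_antisymm_iff, realDiagonal_le_iff]
  rw [isStarProjection_iff', ← map_mul, hidem, funext_iff]
  simp only [Pi.mul_apply, ← IsIdempotentElem.iff_eq_zero_or_one, IsIdempotentElem]
  exact and_iff_left isSelfAdjoint_realDiagonal

lemma realDiagonal_indicator_mem_grassmannian (S : Finset ι) :
    realDiagonal 𝕜 ((S : Set ι).indicator 1) ∈ grassmannian 𝕜 ι #S := by
  refine ⟨isStarProjection_realDiagonal_iff.2 (Set.indicator_eq_zero_or_self _ _), ?_⟩
  rw [trace_realDiagonal]
  simp [Set.indicator_apply]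

lemma exists_conjStarAlgAut_realDiagonal_eq (hA : A.IsHermitian) :
    ∃ (U : unitary (Matrix ι ι 𝕜)) (a : ι → ℝ), conjStarAlgAut 𝕜 _ U (realDiagonal 𝕜 a) = A :=
  ⟨hA.eigenvectorUnitary, hA.eigenvalues, hA.spectral_theorem.symm⟩

end RealDiagonal

section Splitting

variable {𝕜 ι : Type*} [RCLike 𝕜] [Fintype ι] {A B P : Matrix ι ι 𝕜} {x : ι → 𝕜} {t : ℝ} {j : ℕ}

lemma rank_le_of_eq_add_smul (ht : t ∈ Set.Ioo 0 1) (hP : 0 ≤ P) (hB : 0 ≤ B)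
    (hA : A = t • P + (1 - t) • B) : B.rank ≤ A.rank := by
  have ht' := sub_pos.2 ht.2
  refine rank_le_of_mulVec_eq_zero_imp fun v hv => mulVec_eq_zero_of_smul_le ht' hB ?_ hv
  exact hA ▸ le_add_of_nonneg_left (smul_nonneg ht.1.le hP)

lemma rank_lt_of_eq_add_smul (ht : t ∈ Set.Ioo 0 1) (hP : 0 ≤ P) (hB : 0 ≤ B)
    (hA : A = t • P + (1 - t) • B) (hx : A *ᵥ x = t • P *ᵥ x) (hx0 : A *ᵥ x ≠ 0) :
    B.rank < A.rank := by
  have ht' := sub_pos.2 ht.2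
  have hBx : B *ᵥ x = 0 := by
    rw [hA, add_mulVec, smul_mulVec, smul_mulVec, add_eq_left] at hx
    exact (smul_eq_zero_iff_right ht'.ne').1 hx
  refine rank_lt_of_mulVec_eq_zero_imp (fun v hv => mulVec_eq_zero_of_smul_le ht' hB ?_ hv) hBx hx0
  exact hA ▸ le_add_of_nonneg_left (smul_nonneg ht.1.le hP)

lemma isStarProjection_vecMulVec {u : ι → 𝕜} (hu : star u ⬝ᵥ u = 1) :
    IsStarProjection (vecMulVec u (star u)) where
  isIdempotentElem := by rw [IsIdempotentElem, vecMulVec_mul_vecMulVec, hu, one_smul]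
  isSelfAdjoint := by
    rw [IsSelfAdjoint, star_eq_conjTranspose, conjTranspose_vecMulVec, star_star]

lemma exists_mem_stdSimplex_sum_mul_div_eq_one {a : ι → ℝ} {k l : ι} (ht : 0 < t) (hl : 0 < a l)
    (hlt : a l ≤ t) (htk : t ≤ a k) :
    ∃ w ∈ stdSimplex ℝ ι, (∀ i, i ≠ k → i ≠ l → w i = 0) ∧ ∑ i, w i * (t / a i) = 1 := by
  classical
  have h1 : (1 : ℝ) ∈ segment ℝ (t / a k) (t / a l) := by
    have hk : t / a k ≤ 1 := div_le_one_of_le₀ htk (ht.le.trans htk)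
    have hl' : 1 ≤ t / a l := (one_le_div hl).2 hlt
    rw [segment_eq_Icc (hk.trans hl')]
    exact ⟨hk, hl'⟩
  obtain ⟨p, q, hp, hq, hpq, h⟩ := h1
  refine ⟨p • Pi.single k 1 + q • Pi.single l 1, ?_, fun i hik hil => by simp [hik, hil], ?_⟩
  · exact convex_stdSimplex ℝ ι (single_mem_stdSimplex ℝ k) (single_mem_stdSimplex ℝ l) hp hq hpq
  · simpa [add_mul, sum_add_distrib, Pi.single_apply] using h

variable [DecidableEq ι]

/-- `A` lies on a segment from a rank `j` projection to a point `B` of the Fantope such that the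
rank of `B` is below `ρ` and that of `1 - B` is below `σ`. The two ranks are the complexity measure
that decreases along the induction bounding the number of projections needed to represent `A`. -/
def SplitsBelow (j : ℕ) (A : Matrix ι ι 𝕜) (ρ σ : ℕ) : Prop :=
  ∃ P ∈ grassmannian 𝕜 ι j, ∃ B ∈ fantope 𝕜 ι j, A ∈ segment ℝ P B ∧ B.rank < ρ ∧ (1 - B).rank < σ

lemma exists_mem_fantope_eq_add_smul (ht : t < 1) (hA : A ∈ fantope 𝕜 ι j)
    (hP : P ∈ grassmannian 𝕜 ι j) (hPA : t • P ≤ A) (hPA' : t • (1 - P) ≤ 1 - A) :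
    ∃ B ∈ fantope 𝕜 ι j, A = t • P + (1 - t) • B := by
  have ht' := sub_pos.2 ht
  refine ⟨(1 - t)⁻¹ • (A - t • P), ⟨⟨?_, ?_⟩, ?_⟩, ?_⟩
  · exact smul_nonneg (inv_pos.2 ht').le (sub_nonneg.2 hPA)
  · rw [inv_smul_le_iff_of_pos ht', ← sub_nonneg]
    convert sub_nonneg.2 hPA' using 1
    module
  · rw [trace_smul, trace_sub, trace_smul, hA.2, hP.2, ← one_smul ℝ (j : 𝕜), smul_smul,
      ← sub_smul, smul_smul, mul_one, inv_mul_cancel₀ ht'.ne']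
  · rw [smul_inv_smul₀ ht'.ne', add_sub_cancel]

section Peeling

variable {a : ι → ℝ} {u x : ι → 𝕜} {R : Finset ι} {i : ι}

/-- For a unit vector `u` vanishing on `R`, the orthogonal projection onto the span of `u` and of
the coordinate vectors indexed by `R`. -/
noncomputable def spanProjection (R : Finset ι) (u : ι → 𝕜) : Matrix ι ι 𝕜 :=
  realDiagonal 𝕜 ((R : Set ι).indicator 1) + vecMulVec u (star u)

lemma realDiagonal_indicator_mulVec_eq_zero (hx : ∀ i ∈ R, x i = 0) :
    realDiagonal 𝕜 ((R : Set ι).indicator 1) *ᵥ x = 0 := by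
  rw [realDiagonal_mulVec]
  ext i
  by_cases hi : i ∈ R <;> simp [hi, hx]

lemma spanProjection_mem_grassmannian (hu : star u ⬝ᵥ u = 1) (huR : ∀ i ∈ R, u i = 0) :
    spanProjection R u ∈ grassmannian 𝕜 ι (#R + 1) := by
  obtain ⟨hR, htr⟩ := realDiagonal_indicator_mem_grassmannian (𝕜 := 𝕜) R
  refine ⟨hR.add (isStarProjection_vecMulVec hu) ?_, ?_⟩
  · rw [mul_vecMulVec, realDiagonal_indicator_mulVec_eq_zero huR, zero_vecMulVec]
  · rw [spanProjection, trace_add, htr, trace_vecMulVec, dotProduct_comm, hu, Nat.cast_add,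
      Nat.cast_one]

lemma spanProjection_mulVec (hx : ∀ i ∈ R, x i = 0) :
    spanProjection R u *ᵥ x = (star u ⬝ᵥ x) • u := by
  rw [spanProjection, add_mulVec, realDiagonal_indicator_mulVec_eq_zero hx, zero_add,
    vecMulVec_mulVec, op_smul_eq_smul]

lemma one_sub_spanProjection_mulVec_single (hi : i ∉ R) (hu : u i = 0) :
    (1 - spanProjection R u) *ᵥ Pi.single i 1 = Pi.single i 1 := by
  have hx : ∀ k ∈ R, (Pi.single i 1 : ι → 𝕜) k = 0 := fun k hk =>
    Pi.single_eq_of_ne (ne_of_mem_of_not_mem hk hi) 1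
  rw [sub_mulVec, one_mulVec, spanProjection_mulVec hx, dotProduct_single_one, Pi.star_apply, hu,
    star_zero, zero_smul, sub_zero]

lemma smul_spanProjection_le (ha : 0 ≤ a) (htR : ∀ i ∈ R, t ≤ a i)
    (hxR : ∀ i ∈ R, x i = 0) (hax : realDiagonal 𝕜 a *ᵥ x = u) (hux : t • (star u ⬝ᵥ x) = 1) :
    t • spanProjection R u ≤ realDiagonal 𝕜 a := by
  set a' : ι → ℝ := (R : Set ι)ᶜ.indicator a with ha'
  have ha'x : realDiagonal 𝕜 a' *ᵥ x = u := by
    rw [← hax, realDiagonal_mulVec, realDiagonal_mulVec]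
    ext i
    by_cases hi : i ∈ R <;> simp [ha', hi, hxR]
  have hu : t • vecMulVec u (star u) ≤ realDiagonal 𝕜 a' := by
    refine smul_vecMulVec_le ?_ ha'x hux
    rw [← map_zero (realDiagonal 𝕜), realDiagonal_le_iff]
    exact Set.indicator_nonneg fun i _ => ha i
  have hR : t • (R : Set ι).indicator 1 + a' ≤ a := by
    intro i
    by_cases hi : i ∈ R <;> simp [ha', hi, htR]
  rw [spanProjection, smul_add, ← map_smul]
  calc realDiagonal 𝕜 (t • (R : Set ι).indicator 1) + t • vecMulVec u (star u)
      ≤ realDiagonal 𝕜 (t • (R : Set ι).indicator 1) + realDiagonal 𝕜 a' := by gcongr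
    _ = realDiagonal 𝕜 (t • (R : Set ι).indicator 1 + a') := (map_add _ _ _).symm
    _ ≤ realDiagonal 𝕜 a := realDiagonal_le_iff.2 hR

lemma smul_one_sub_spanProjection_le (ht : 0 ≤ t) (ha : a ≤ 1)
    (htR : ∀ i ∉ R, a i ≤ 1 - t) :
    t • (1 - spanProjection R u) ≤ 1 - realDiagonal 𝕜 a := by
  have hu : 0 ≤ vecMulVec u (star u) := (posSemidef_vecMulVec_self_star u).nonneg
  have hR : t • (1 - (R : Set ι).indicator 1) ≤ 1 - a := by
    intro i
    by_cases hi : i ∈ R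
    · simpa [hi] using ha i
    · simpa [hi, le_sub_comm] using htR i hi
  calc t • (1 - spanProjection R u)
      ≤ t • (1 - realDiagonal 𝕜 ((R : Set ι).indicator 1)) := by
        gcongr
        exact le_add_of_nonneg_right hu
    _ = realDiagonal 𝕜 (t • (1 - (R : Set ι).indicator 1)) := by
        rw [map_smul, map_sub, map_one]
    _ ≤ realDiagonal 𝕜 (1 - a) := realDiagonal_le_iff.2 hR
    _ = 1 - realDiagonal 𝕜 a := by rw [map_sub, map_one]

lemma splitsBelow_realDiagonal_of_mulVec_eq (ha : realDiagonal 𝕜 a ∈ fantope 𝕜 ι (#R + 1))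
    (ht : t ∈ Set.Ioo 0 1) (htR : ∀ i ∈ R, t ≤ a i) (htR' : ∀ i ∉ R, a i ≤ 1 - t)
    (hu : star u ⬝ᵥ u = 1) (huR : ∀ i ∈ R, u i = 0) (hxR : ∀ i ∈ R, x i = 0)
    (hax : realDiagonal 𝕜 a *ᵥ x = u) (hux : t • (star u ⬝ᵥ x) = 1) :
    SplitsBelow (#R + 1) (realDiagonal 𝕜 a) (realDiagonal 𝕜 a).rank
        ((1 - realDiagonal 𝕜 a).rank + 1) ∧
      ((∃ i ∉ R, u i = 0 ∧ a i = 1 - t) →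
        SplitsBelow (#R + 1) (realDiagonal 𝕜 a) (realDiagonal 𝕜 a).rank
          (1 - realDiagonal 𝕜 a).rank) := by
  have hP := spanProjection_mem_grassmannian hu huR
  have ha01 := (realDiagonal_mem_fantope_iff.1 ha).1
  obtain ⟨B, hB, hD⟩ := exists_mem_fantope_eq_add_smul ht.2 ha hP
    (smul_spanProjection_le ha01.1 htR hxR hax hux)
    (smul_one_sub_spanProjection_le ht.1.le ha01.2 htR')
  have hseg : realDiagonal 𝕜 a ∈ segment ℝ (spanProjection R u) B :=
    ⟨t, 1 - t, ht.1.le, (sub_pos.2 ht.2).le, by ring, hD.symm⟩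
  have hP1 := hP.1.one_sub_nonneg
  have hB1 := sub_nonneg.2 hB.1.2
  have hD1 : 1 - realDiagonal 𝕜 a = t • (1 - spanProjection R u) + (1 - t) • (1 - B) := by
    rw [hD]
    module
  have hrank : B.rank < (realDiagonal 𝕜 a).rank := by
    refine rank_lt_of_eq_add_smul ht hP.1.nonneg hB.1.1 hD (x := x) ?_ ?_
    · rw [hax, spanProjection_mulVec hxR, ← smul_assoc, hux, one_smul]
    · rw [hax]
      rintro rfl
      simp at hu
  refine ⟨⟨_, hP, B, hB, hseg, hrank, ?_⟩, ?_⟩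
  · exact Nat.lt_succ_of_le (rank_le_of_eq_add_smul ht hP1 hB1 hD1)
  · rintro ⟨i, hi, hui, hai⟩
    have hDi : (1 - realDiagonal 𝕜 a) *ᵥ Pi.single i 1 = t • Pi.single i (1 : 𝕜) := by
      rw [← map_one (realDiagonal 𝕜), ← map_sub, realDiagonal_eq_diagonal, diagonal_mulVec_single,
        Pi.sub_apply, Pi.one_apply, hai, sub_sub_cancel, ← Pi.single_smul,
        RCLike.real_smul_eq_coe_mul]
    refine ⟨_, hP, B, hB, hseg, hrank, rank_lt_of_eq_add_smul ht hP1 hB1 hD1 (hDi.trans ?_) ?_⟩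
    · rw [one_sub_spanProjection_mulVec_single hi hui]
    · rw [hDi]
      simp [ht.1.ne']

/-- The vector is `u = ∑ √(w i) e i` with `w` supported on `{k, l}` and `t ∑ w i / a i = 1`. -/
lemma splitsBelow_realDiagonal {k l : ι} (ha : realDiagonal 𝕜 a ∈ fantope 𝕜 ι (#R + 1))
    (ht1 : t < 1) (hk : k ∉ R) (hl : l ∉ R) (hl0 : 0 < a l) (hlt : a l ≤ t) (htk : t ≤ a k)
    (htR : ∀ i ∈ R, t ≤ a i) (htR' : ∀ i ∉ R, a i ≤ 1 - t) :
    SplitsBelow (#R + 1) (realDiagonal 𝕜 a) (realDiagonal 𝕜 a).rank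
        ((1 - realDiagonal 𝕜 a).rank + 1) ∧
      ((∃ i ∉ R, i ≠ k ∧ i ≠ l ∧ a i = 1 - t) →
        SplitsBelow (#R + 1) (realDiagonal 𝕜 a) (realDiagonal 𝕜 a).rank
          (1 - realDiagonal 𝕜 a).rank) := by
  have ht0 := hl0.trans_le hlt
  obtain ⟨w, hw, hwkl, hwt⟩ := exists_mem_stdSimplex_sum_mul_div_eq_one ht0 hl0 hlt htk
  have hwR : ∀ i ∈ R, w i = 0 := fun i hi =>
    hwkl i (ne_of_mem_of_not_mem hi hk) (ne_of_mem_of_not_mem hi hl)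
  have hwa : ∀ i, a i = 0 → w i = 0 := fun i hi => by
    refine hwkl i ?_ ?_ <;> rintro rfl <;> linarith
  set u : ι → 𝕜 := fun i => (√(w i) : 𝕜) with hu_def
  set x : ι → 𝕜 := fun i => (√(w i) / a i : ℝ) with hx_def
  have hu : star u ⬝ᵥ u = 1 := by
    have hsum : ∑ i, √(w i) * √(w i) = 1 := by
      simp only [Real.mul_self_sqrt (hw.1 _), hw.2]
    simpa [hu_def, dotProduct] using congrArg (RCLike.ofReal (K := 𝕜)) hsum
  have hux : t • (star u ⬝ᵥ x) = 1 := by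
    have hsum : t * ∑ i, √(w i) * (√(w i) / a i) = 1 := by
      rw [← hwt, mul_sum]
      refine sum_congr rfl fun i _ => ?_
      rw [← mul_div_assoc, Real.mul_self_sqrt (hw.1 i)]
      ring
    simpa [hu_def, hx_def, dotProduct, RCLike.real_smul_eq_coe_mul] using
      congrArg (RCLike.ofReal (K := 𝕜)) hsum
  have hax : realDiagonal 𝕜 a *ᵥ x = u := by
    rw [realDiagonal_mulVec]
    ext i
    rcases eq_or_ne (a i) 0 with h | h
    · simp [hu_def, h, hwa i h]
    · rw [hx_def, ← RCLike.ofReal_mul, mul_div_cancel₀ _ h]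
  have hsplit := splitsBelow_realDiagonal_of_mulVec_eq ha ⟨ht0, ht1⟩ htR htR' hu
    (fun i hi => by simp [hu_def, hwR i hi]) (fun i hi => by simp [hx_def, hwR i hi]) hax hux
  refine hsplit.imp_right fun h ⟨i, hi, hik, hil, hai⟩ => h ⟨i, hi, ?_, hai⟩
  simp [hu_def, hwkl i hik hil]

end Peeling

end Splitting

section Selection

variable {ι : Type*} {a : ι → ℝ} {I : Finset ι} {d : ℕ} {m : ℝ}

lemma le_half_of_forall_le (hd : 0 < d) (hsum : ∑ i ∈ I, a i = d) (hI : 2 * d ≤ #I)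
    (hma : ∀ i ∈ I, m ≤ a i) : m ≤ 1 / 2 := by
  have hmI : #I * m ≤ d := by
    rw [← hsum, ← nsmul_eq_mul]
    exact card_nsmul_le_sum _ _ _ hma
  have hIR : 2 * (d : ℝ) ≤ #I := mod_cast hI
  have hd' : (0 : ℝ) < d := mod_cast hd
  nlinarith

lemma card_filter_one_sub_lt (hd : 0 < d) (hsum : ∑ i ∈ I, a i = d) (hI : 2 * d ≤ #I)
    (hm : 0 ≤ m) (hma : ∀ i ∈ I, m ≤ a i) : #{i ∈ I | 1 - m < a i} < d := by
  by_contra! hG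
  set G := {i ∈ I | 1 - m < a i}
  have hIR : 2 * (d : ℝ) ≤ #I := mod_cast hI
  have hGR : (d : ℝ) ≤ #G := mod_cast hG
  have hlt : #G * (1 - 2 * m) < ∑ i ∈ G, (a i - m) := by
    rw [← nsmul_eq_mul, ← sum_const]
    refine sum_lt_sum_of_nonempty (card_pos.1 (hd.trans_le hG)) fun i hi => ?_
    linarith [(mem_filter.1 hi).2]
  have hle : ∑ i ∈ G, (a i - m) ≤ d - #I * m := by
    rw [← hsum, ← nsmul_eq_mul, ← sum_const, ← sum_sub_distrib]
    exact sum_le_sum_of_subset_of_nonneg (filter_subset _ _) fun i hi _ => sub_nonneg.2 (hma i hi)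
  have hm2 := le_half_of_forall_le hd hsum hI hma
  nlinarith

lemma exists_subset_le_of_two_mul_le_card (hd : 0 < d) (hsum : ∑ i ∈ I, a i = d)
    (hI : 2 * d ≤ #I) (ha : ∀ i ∈ I, 0 ≤ a i) :
    ∃ k ∈ I, ∃ R ⊆ I, k ∉ R ∧ #R + 1 = d ∧ (∀ i ∈ R, a k ≤ a i) ∧
      ∀ i ∈ I, i ∉ R → a i ≤ 1 - a k := by
  classical
  have hIne : I.Nonempty := card_pos.1 (by omega)
  obtain ⟨k, hk, hmin⟩ := exists_min_image I a hIne
  set G := {i ∈ I | 1 - a k < a i}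
  have hGd : #G < d := card_filter_one_sub_lt hd hsum hI (ha k hk) hmin
  have hk2 : a k ≤ 1 / 2 := le_half_of_forall_le hd hsum hI hmin
  have hkG : k ∉ G := fun h => by linarith [(mem_filter.1 h).2]
  obtain ⟨R, hGR, hRI, hR⟩ := exists_subsuperset_card_eq (n := d - 1)
    (subset_erase.2 ⟨filter_subset _ I, hkG⟩) (Nat.le_sub_one_of_lt hGd)
    (by rw [card_erase_of_mem hk]; omega)
  obtain ⟨hRI, hkR⟩ := subset_erase.1 hRI
  refine ⟨k, hk, R, hRI, hkR, by omega, fun i hi => hmin i (hRI hi), fun i hi hiR => ?_⟩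
  by_contra! h
  exact hiR (hGR (mem_filter.2 ⟨hi, h⟩))

lemma exists_subset_le_of_card_eq_two_mul {p q : ι} (hd : 0 < d) (hsum : ∑ i ∈ I, a i = d)
    (hI : #I = 2 * d) (hmax : ∀ i ∈ I, a i ≤ a q) (hq1 : a q ≤ 1) :
    ∃ R ⊆ I, ∃ k ∈ I, k ∉ R ∧ p ∉ R ∧ q ∉ R ∧ q ≠ k ∧ #R + 1 = d ∧ 1 - a q ≤ a k ∧
      ∀ i ∈ R, 1 - a q ≤ a i := by
  classical
  have hlow : #{i ∈ I | a i < 1 - a q} < d := by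
    have hsum' : ∑ i ∈ I, (1 - a i) = d := by
      rw [sum_sub_distrib, hsum, sum_const, hI, nsmul_one]
      push_cast
      ring
    refine (card_le_card fun i => ?_).trans_lt (card_filter_one_sub_lt hd hsum' hI.ge
      (sub_nonneg.2 hq1) fun i hi => sub_le_sub_left (hmax i hi) 1)
    simp only [mem_filter]
    exact fun hi => ⟨hi.1, by linarith⟩
  set S := {i ∈ I | 1 - a q ≤ a i}
  set T := S.erase q
  have hT : d ≤ #T := by
    have hcard : #{i ∈ I | a i < 1 - a q} + #S = #I := by
      simpa only [not_lt] using card_filter_add_card_filter_not (s := I) (fun i => a i < 1 - a q)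
    have herase : #S - 1 ≤ #T := pred_card_le_card_erase
    omega
  obtain ⟨R, hRT, hR⟩ := exists_subset_card_eq (s := T.erase p) (n := d - 1)
    ((Nat.sub_le_sub_right hT 1).trans pred_card_le_card_erase)
  obtain ⟨k, hkT, hkR⟩ := exists_mem_notMem_of_card_lt_card (s := R) (t := T) (by omega)
  obtain ⟨hRT, hpR⟩ := subset_erase.1 hRT
  have hTq : q ∉ T := notMem_erase _ _
  have hTI : ∀ i ∈ T, i ∈ I ∧ 1 - a q ≤ a i := fun i hi => mem_filter.1 (mem_of_mem_erase hi)
  exact ⟨R, fun i hi => (hTI i (hRT hi)).1, k, (hTI k hkT).1, hkR, hpR, fun h => hTq (hRT h),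
    fun h => hTq (h ▸ hkT), by omega, (hTI k hkT).2, fun i hi => (hTI i (hRT hi)).2⟩

end Selection

section DiagonalSplitting

variable {𝕜 ι : Type*} [RCLike 𝕜] [Fintype ι] {a : ι → ℝ} {j d : ℕ} {t : ℝ}

/-- The indices of the entries of `a` other than `0` and `1`; for a diagonal matrix of the Fantope
these are the eigenvalues that keep it from being a projection. -/
noncomputable def fractionalSupport (a : ι → ℝ) : Finset ι :=
  {i | a i ≠ 0 ∧ a i ≠ 1}

lemma mem_fractionalSupport {i : ι} : i ∈ fractionalSupport a ↔ a i ≠ 0 ∧ a i ≠ 1 :=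
  mem_filter_univ i

lemma mem_Ioo_of_mem_fractionalSupport (ha : a ∈ Set.Icc 0 1) :
    ∀ i ∈ fractionalSupport a, a i ∈ Set.Ioo 0 1 := fun i hi =>
  have hi := mem_fractionalSupport.1 hi
  ⟨(ha.1 i).lt_of_ne' hi.1, (ha.2 i).lt_of_ne hi.2⟩

lemma fractionalSupport_one_sub : fractionalSupport (1 - a) = fractionalSupport a := by
  ext i
  rw [mem_fractionalSupport, mem_fractionalSupport, Pi.sub_apply, Pi.one_apply, sub_ne_zero,
    ne_comm, and_comm, ne_eq (1 - a i), sub_eq_self]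

lemma sum_eq_card_filter_eq_one_add_sum_fractionalSupport :
    ∑ i, a i = #{i | a i = 1} + ∑ i ∈ fractionalSupport a, a i := by
  classical
  rw [← sum_filter_add_sum_filter_not univ (a · = 1), sum_congr rfl fun i hi => (mem_filter.1 hi).2,
    sum_const, nsmul_one, add_right_inj]
  refine (sum_subset (fun i hi => ?_) fun i _ hi => ?_).symm
  · simpa using (mem_fractionalSupport.1 hi).2
  · by_contra h
    simp_all [mem_fractionalSupport]

variable [DecidableEq ι]

lemma card_filter_eq_one_add_card_fractionalSupport :
    #{i | a i = 1} + #(fractionalSupport a) = (realDiagonal 𝕜 a).rank := by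
  rw [rank_realDiagonal, ← card_filter_add_card_filter_not (s := {i | a i ≠ 0}) (a · = 1),
    filter_filter, filter_filter]
  congr 2
  exact filter_congr fun i _ => ⟨fun h => ⟨by simp [h], h⟩, And.right⟩

lemma card_filter_eq_one_add_rank_one_sub :
    #{i | a i = 1} + (1 - realDiagonal 𝕜 a).rank = Fintype.card ι := by
  rw [rank_one_sub_realDiagonal, card_filter_add_card_filter_not, card_univ]

lemma exists_sum_fractionalSupport_eq (ha : realDiagonal 𝕜 a ∈ fantope 𝕜 ι j) :
    ∃ d : ℕ, #{i | a i = 1} + d = j ∧ ∑ i ∈ fractionalSupport a, a i = d := by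
  obtain ⟨ha01, hsum⟩ := realDiagonal_mem_fantope_iff.1 ha
  rw [sum_eq_card_filter_eq_one_add_sum_fractionalSupport] at hsum
  have hnonneg := sum_nonneg fun i (_ : i ∈ fractionalSupport a) => ha01.1 i
  obtain ⟨d, rfl⟩ : ∃ d, j = #{i | a i = 1} + d := by
    refine Nat.exists_eq_add_of_le ?_
    rify
    exact (le_add_of_nonneg_right hnonneg).trans_eq hsum
  refine ⟨d, rfl, ?_⟩
  push_cast at hsum
  exact add_left_cancel hsum

lemma realDiagonal_mem_grassmannian_of_rank_le (ha : realDiagonal 𝕜 a ∈ fantope 𝕜 ι j)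
    (hrank : (realDiagonal 𝕜 a).rank ≤ j) : realDiagonal 𝕜 a ∈ grassmannian 𝕜 ι j := by
  obtain ⟨d, hd, hsum⟩ := exists_sum_fractionalSupport_eq ha
  have hF := mem_Ioo_of_mem_fractionalSupport (realDiagonal_mem_fantope_iff.1 ha).1
  rw [← card_filter_eq_one_add_card_fractionalSupport] at hrank
  have hempty : fractionalSupport a = ∅ := by
    by_contra! hne
    have hlt := sum_lt_sum_of_nonempty hne fun i hi => (hF i hi).2
    rw [hsum, sum_const, nsmul_one, Nat.cast_lt] at hlt
    omega
  refine ⟨isStarProjection_realDiagonal_iff.2 fun i => ?_, ha.2⟩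
  by_contra! hi
  exact notMem_empty i (hempty ▸ mem_fractionalSupport.2 hi)

lemma splitsBelow_realDiagonal_of_subset_fractionalSupport {R : Finset ι} {k l : ι}
    (ha : realDiagonal 𝕜 a ∈ fantope 𝕜 ι j) (hR : R ⊆ fractionalSupport a)
    (hj : #{i | a i = 1} + (#R + 1) = j) (hk : k ∈ fractionalSupport a) (hkR : k ∉ R)
    (hl : l ∈ fractionalSupport a) (hlR : l ∉ R) (hlt : a l ≤ t) (htk : t ≤ a k)
    (htR : ∀ i ∈ R, t ≤ a i) (htR' : ∀ i ∈ fractionalSupport a, i ∉ R → a i ≤ 1 - t) :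
    SplitsBelow j (realDiagonal 𝕜 a) (realDiagonal 𝕜 a).rank ((1 - realDiagonal 𝕜 a).rank + 1) ∧
      ((∃ i ∈ fractionalSupport a, i ∉ R ∧ i ≠ k ∧ i ≠ l ∧ a i = 1 - t) →
        SplitsBelow j (realDiagonal 𝕜 a) (realDiagonal 𝕜 a).rank
          (1 - realDiagonal 𝕜 a).rank) := by
  have hF := mem_Ioo_of_mem_fractionalSupport (realDiagonal_mem_fantope_iff.1 ha).1
  have ht1 := htk.trans_lt (hF k hk).2
  set R' := ({i | a i = 1} : Finset ι) ∪ R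
  have hmem : ∀ i, i ∈ R' ↔ a i = 1 ∨ i ∈ R := by simp [R']
  have hnotMem : ∀ i ∈ fractionalSupport a, i ∉ R → i ∉ R' := fun i hi hiR h =>
    ((hmem i).1 h).elim (mem_fractionalSupport.1 hi).2 hiR
  have hcard : #R' = #{i | a i = 1} + #R := by
    refine card_union_of_disjoint (disjoint_left.2 fun i hi hiR => ?_)
    exact (mem_fractionalSupport.1 (hR hiR)).2 ((mem_filter_univ i).1 hi)
  obtain rfl : #R' + 1 = j := by rw [hcard, add_assoc, hj]
  have htop : ∀ i ∈ R', t ≤ a i := fun i hi =>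
    ((hmem i).1 hi).elim (fun h => ht1.le.trans_eq h.symm) (htR i)
  have hbot : ∀ i ∉ R', a i ≤ 1 - t := fun i hi => by
    obtain ⟨hi1, hiR⟩ := not_or.1 (mt (hmem i).2 hi)
    rcases eq_or_ne (a i) 0 with h0 | h0
    · exact h0.trans_le (sub_nonneg.2 ht1.le)
    · exact htR' i (mem_fractionalSupport.2 ⟨h0, hi1⟩) hiR
  refine (splitsBelow_realDiagonal ha ht1 (hnotMem k hk hkR) (hnotMem l hl hlR) (hF l hl).1 hlt
    htk htop hbot).imp_right fun h ⟨i, hi, hiR, hne⟩ => h ⟨i, hnotMem i hi hiR, hne⟩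

lemma splitsBelow_realDiagonal_of_rank_le (ha : realDiagonal 𝕜 a ∈ fantope 𝕜 ι j)
    (hj : j < (realDiagonal 𝕜 a).rank)
    (hrank : (1 - realDiagonal 𝕜 a).rank + 2 * j ≤ (realDiagonal 𝕜 a).rank + Fintype.card ι) :
    SplitsBelow j (realDiagonal 𝕜 a) (realDiagonal 𝕜 a).rank
      ((1 - realDiagonal 𝕜 a).rank + 1) := by
  obtain ⟨d, hd, hsum⟩ := exists_sum_fractionalSupport_eq ha
  have hF := mem_Ioo_of_mem_fractionalSupport (realDiagonal_mem_fantope_iff.1 ha).1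
  have hcard0 := card_filter_eq_one_add_card_fractionalSupport (𝕜 := 𝕜) (a := a)
  have hcard1 := card_filter_eq_one_add_rank_one_sub (𝕜 := 𝕜) (a := a)
  have hd0 : 0 < d := by
    have hne : (fractionalSupport a).Nonempty := card_pos.1 (by omega)
    have hpos := sum_pos (fun i hi => (hF i hi).1) hne
    rwa [hsum, Nat.cast_pos] at hpos
  obtain ⟨k, hk, R, hR, hkR, hRd, htop, hbot⟩ := exists_subset_le_of_two_mul_le_card hd0 hsum
    (by omega) fun i hi => (hF i hi).1.le
  exact (splitsBelow_realDiagonal_of_subset_fractionalSupport ha hR (by omega) hk hkR hk hkR le_rfl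
    le_rfl htop hbot).1

lemma splitsBelow_realDiagonal_of_add_le_one {p q : ι} (ha : realDiagonal 𝕜 a ∈ fantope 𝕜 ι j)
    (hrank : (1 - realDiagonal 𝕜 a).rank + 2 * j = (realDiagonal 𝕜 a).rank + Fintype.card ι)
    (hp : p ∈ fractionalSupport a) (hq : q ∈ fractionalSupport a) (hpq : q ≠ p)
    (hmax : ∀ i ∈ fractionalSupport a, a i ≤ a q) (hle : a p + a q ≤ 1) :
    SplitsBelow j (realDiagonal 𝕜 a) (realDiagonal 𝕜 a).rank (1 - realDiagonal 𝕜 a).rank := by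
  obtain ⟨d, hd, hsum⟩ := exists_sum_fractionalSupport_eq ha
  have hF := mem_Ioo_of_mem_fractionalSupport (realDiagonal_mem_fantope_iff.1 ha).1
  have hcard0 := card_filter_eq_one_add_card_fractionalSupport (𝕜 := 𝕜) (a := a)
  have hcard1 := card_filter_eq_one_add_rank_one_sub (𝕜 := 𝕜) (a := a)
  have hd0 : 0 < d := by
    have := card_pos.2 ⟨p, hp⟩
    omega
  obtain ⟨R, hR, k, hk, hkR, hpR, hqR, hqk, hRd, htk, htR⟩ :=
    exists_subset_le_of_card_eq_two_mul (p := p) hd0 hsum (by omega) hmax (hF q hq).2.le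
  refine (splitsBelow_realDiagonal_of_subset_fractionalSupport ha hR (by omega) hk hkR hp hpR
    (le_sub_right_of_add_le hle) htk htR fun i hi _ => ?_).2 ⟨q, hq, hqR, hqk, hpq, ?_⟩
  · simpa using hmax i hi
  · simp

end DiagonalSplitting

section UpperBound

variable {𝕜 ι : Type*} [RCLike 𝕜] [Fintype ι] [DecidableEq ι]
  {A : Matrix ι ι 𝕜} {a : ι → ℝ} {j m ρ ρ' σ σ' : ℕ}

namespace SplitsBelow

lemma mono (h : SplitsBelow j A ρ σ) (hρ : ρ ≤ ρ') (hσ : σ ≤ σ') : SplitsBelow j A ρ' σ' := by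
  obtain ⟨P, hP, B, hB, hA, hBρ, hBσ⟩ := h
  exact ⟨P, hP, B, hB, hA, hBρ.trans_le hρ, hBσ.trans_le hσ⟩

lemma one_sub (hj : j ≤ Fintype.card ι) (h : SplitsBelow j A ρ σ) :
    SplitsBelow (Fintype.card ι - j) (1 - A) σ ρ := by
  obtain ⟨P, hP, B, hB, ⟨s, t, hs, ht, hst, rfl⟩, hBρ, hBσ⟩ := h
  refine ⟨1 - P, one_sub_mem_grassmannian hj hP, 1 - B, one_sub_mem_fantope hj hB,
    ⟨s, t, hs, ht, hst, ?_⟩, hBσ, by rwa [sub_sub_cancel]⟩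
  rw [smul_sub, smul_sub, sub_add_sub_comm, ← add_smul, hst, one_smul]

lemma conjStarAlgAut (U : unitary (Matrix ι ι 𝕜)) (h : SplitsBelow j A ρ σ) :
    SplitsBelow j (conjStarAlgAut 𝕜 _ U A) ρ σ := by
  obtain ⟨P, hP, B, hB, hA, hBρ, hBσ⟩ := h
  refine ⟨_, conjStarAlgAut_mem_grassmannian U hP, _, (conjStarAlgAut_mem_fantope_iff U).2 hB, ?_,
    by rwa [rank_conjStarAlgAut], ?_⟩
  · have hseg := image_segment ℝ ((Unitary.conjStarAlgAut 𝕜 _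
      U).toAlgEquiv.toLinearMap.restrictScalars ℝ).toAffineMap P B
    exact hseg.subset ⟨A, hA, rfl⟩
  · rwa [← map_one (Unitary.conjStarAlgAut 𝕜 _ U), ← map_sub, rank_conjStarAlgAut]

end SplitsBelow

lemma splitsBelow_realDiagonal_of_one_sub (hj : j ≤ Fintype.card ι)
    (h : SplitsBelow (Fintype.card ι - j) (realDiagonal 𝕜 (1 - a)) σ ρ) :
    SplitsBelow j (realDiagonal 𝕜 a) ρ σ := by
  simpa only [map_sub, map_one, sub_sub_cancel, Nat.sub_sub_self hj] using
    h.one_sub (Nat.sub_le _ _)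

lemma realDiagonal_one_sub_mem_fantope (hj : j ≤ Fintype.card ι)
    (ha : realDiagonal 𝕜 a ∈ fantope 𝕜 ι j) :
    realDiagonal 𝕜 (1 - a) ∈ fantope 𝕜 ι (Fintype.card ι - j) := by
  rw [map_sub, map_one]
  exact one_sub_mem_fantope hj ha

lemma splitsBelow_realDiagonal_of_rank_eq (hj : j ≤ Fintype.card ι)
    (ha : realDiagonal 𝕜 a ∈ fantope 𝕜 ι j) (hrank : j < (realDiagonal 𝕜 a).rank)
    (hrank' : (1 - realDiagonal 𝕜 a).rank + 2 * j = (realDiagonal 𝕜 a).rank + Fintype.card ι) :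
    SplitsBelow j (realDiagonal 𝕜 a) (realDiagonal 𝕜 a).rank (1 - realDiagonal 𝕜 a).rank := by
  have hcard0 := card_filter_eq_one_add_card_fractionalSupport (𝕜 := 𝕜) (a := a)
  have hcard1 := card_filter_eq_one_add_rank_one_sub (𝕜 := 𝕜) (a := a)
  obtain ⟨p, hp, hmin⟩ := exists_min_image (fractionalSupport a) a (card_pos.1 (by omega))
  obtain ⟨q, hq, hmax⟩ := exists_max_image ((fractionalSupport a).erase p) a
    (card_pos.1 (by rw [card_erase_of_mem hp]; omega))
  obtain ⟨hqp, hqF⟩ := mem_erase.1 hq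
  have hmax' : ∀ i ∈ fractionalSupport a, a i ≤ a q := fun i hi => by
    rcases eq_or_ne i p with rfl | hip
    · exact hmin q hqF
    · exact hmax i (mem_erase.2 ⟨hip, hi⟩)
  rcases le_total (a p + a q) 1 with hle | hge
  · exact splitsBelow_realDiagonal_of_add_le_one ha hrank' hp hqF hqp hmax' hle
  · have hsplit := splitsBelow_realDiagonal_of_add_le_one (p := q) (q := p)
      (realDiagonal_one_sub_mem_fantope hj ha)
      (by simp only [map_sub, map_one, sub_sub_cancel]; omega)
      (by rwa [fractionalSupport_one_sub]) (by rwa [fractionalSupport_one_sub]) hqp.symm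
      (fun i hi => sub_le_sub_left (hmin i (by rwa [fractionalSupport_one_sub] at hi)) 1)
      (by simp only [Pi.sub_apply, Pi.one_apply]; linarith)
    simpa using splitsBelow_realDiagonal_of_one_sub hj hsplit

lemma splitsBelow_realDiagonal_succ (hj : j ≤ Fintype.card ι)
    (ha : realDiagonal 𝕜 a ∈ fantope 𝕜 ι j) (hrank : (realDiagonal 𝕜 a).rank ≤ j + (m + 1))
    (hrank' : (1 - realDiagonal 𝕜 a).rank ≤ Fintype.card ι - j + (m + 1))
    (hm : j + m < (realDiagonal 𝕜 a).rank ∨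
      Fintype.card ι - j + m < (1 - realDiagonal 𝕜 a).rank) :
    SplitsBelow j (realDiagonal 𝕜 a) (j + (m + 1)) (Fintype.card ι - j + (m + 1)) := by
  rcases lt_trichotomy ((1 - realDiagonal 𝕜 a).rank + 2 * j)
    ((realDiagonal 𝕜 a).rank + Fintype.card ι) with hlt | heq | hgt
  · exact (splitsBelow_realDiagonal_of_rank_le ha (by omega) hlt.le).mono hrank (by omega)
  · exact (splitsBelow_realDiagonal_of_rank_eq hj ha (by omega) heq).mono hrank hrank'
  · refine splitsBelow_realDiagonal_of_one_sub hj ((splitsBelow_realDiagonal_of_rank_le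
      (realDiagonal_one_sub_mem_fantope hj ha) ?_ ?_).mono ?_ ?_)
    all_goals
      simp only [map_sub, map_one, sub_sub_cancel]
      omega

lemma splitsBelow_succ (hj : j ≤ Fintype.card ι) (hA : A ∈ fantope 𝕜 ι j)
    (hrank : A.rank ≤ j + (m + 1)) (hrank' : (1 - A).rank ≤ Fintype.card ι - j + (m + 1))
    (hm : j + m < A.rank ∨ Fintype.card ι - j + m < (1 - A).rank) :
    SplitsBelow j A (j + (m + 1)) (Fintype.card ι - j + (m + 1)) := by
  obtain ⟨U, a, rfl⟩ := exists_conjStarAlgAut_realDiagonal_eq (nonneg_iff_posSemidef.1 hA.1.1).1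
  rw [conjStarAlgAut_mem_fantope_iff] at hA
  rw [← map_one (conjStarAlgAut 𝕜 _ U), ← map_sub, rank_conjStarAlgAut] at hrank' hm
  rw [rank_conjStarAlgAut] at hrank hm
  exact (splitsBelow_realDiagonal_succ hj hA hrank hrank' hm).conjStarAlgAut U

lemma mem_grassmannian_of_rank_le (hA : A ∈ fantope 𝕜 ι j) (hrank : A.rank ≤ j) :
    A ∈ grassmannian 𝕜 ι j := by
  obtain ⟨U, a, rfl⟩ := exists_conjStarAlgAut_realDiagonal_eq (nonneg_iff_posSemidef.1 hA.1.1).1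
  rw [conjStarAlgAut_mem_fantope_iff] at hA
  rw [rank_conjStarAlgAut] at hrank
  exact conjStarAlgAut_mem_grassmannian U (realDiagonal_mem_grassmannian_of_rank_le hA hrank)

theorem mem_partialConvexHull_grassmannian_of_rank_le (hj : j ≤ Fintype.card ι)
    (hA : A ∈ fantope 𝕜 ι j) (hrank : A.rank ≤ j + m)
    (hrank' : (1 - A).rank ≤ Fintype.card ι - j + m) :
    A ∈ partialConvexHull (m + 1) (grassmannian 𝕜 ι j) := by
  induction m generalizing A with
  | zero => exact subset_partialConvexHull le_rfl (mem_grassmannian_of_rank_le hA hrank)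
  | succ m ih =>
    by_cases hm : A.rank ≤ j + m ∧ (1 - A).rank ≤ Fintype.card ι - j + m
    · exact partialConvexHull_mono (Nat.le_succ _) (ih hA hm.1 hm.2)
    rw [not_and_or, not_le, not_le] at hm
    obtain ⟨P, hP, B, hB, hseg, hBrank, hBrank'⟩ := splitsBelow_succ hj hA hrank hrank' hm
    exact mem_partialConvexHull_succ_of_mem_segment hP
      (ih hB (Nat.lt_succ_iff.1 hBrank) (Nat.lt_succ_iff.1 hBrank')) hseg

theorem fantope_subset_partialConvexHull (hj : j ≤ Fintype.card ι) :
    fantope 𝕜 ι j ⊆ partialConvexHull (max j (Fintype.card ι - j) + 1) (grassmannian 𝕜 ι j) :=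
  fun A hA => by
    have hrank := A.rank_le_card_width
    have hrank' := (1 - A).rank_le_card_width
    exact mem_partialConvexHull_grassmannian_of_rank_le hj hA (by omega) (by omega)

theorem convexHull_grassmannian (hj : j ≤ Fintype.card ι) :
    convexHull ℝ (grassmannian 𝕜 ι j) = fantope 𝕜 ι j :=
  Set.Subset.antisymm (convexHull_min grassmannian_subset_fantope convex_fantope)
    ((fantope_subset_partialConvexHull hj).trans partialConvexHull_subset_convexHull)

end UpperBound

section LowerBound

variable {𝕜 ι : Type*} [RCLike 𝕜] [Fintype ι] {A D P : Matrix ι ι 𝕜} {j m r : ℕ}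

lemma sub_mem_grassmannian (hP : P ∈ grassmannian 𝕜 ι j) (hD : D ∈ grassmannian 𝕜 ι m)
    (hmj : m ≤ j) (hPD : P * D = D) : P - D ∈ grassmannian 𝕜 ι (j - m) :=
  ⟨hD.1.sub_of_mul_eq_right hP.1 hPD, by rw [trace_sub, hP.2, hD.2, Nat.cast_sub hmj]⟩

lemma rank_of_mem_grassmannian (hP : P ∈ grassmannian 𝕜 ι j) : P.rank = j :=
  Nat.cast_injective ((trace_eq_rank_of_isIdempotentElem hP.1.isIdempotentElem).symm.trans hP.2)

lemma mul_eq_of_smul_one_sub_le [DecidableEq ι] {t : ℝ} (ht : 0 < t) (hP : P ≤ 1)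
    (hPA : t • (1 - P) ≤ 1 - A) (hAD : A * D = D) : P * D = D := by
  have h : (1 - P) * D = 0 := ext_of_mulVec_single fun i => by
    rw [← mulVec_mulVec, zero_mulVec]
    refine mulVec_eq_zero_of_smul_le ht (sub_nonneg.2 hP) hPA ?_
    rw [mulVec_mulVec, sub_mul, one_mul, hAD, sub_self, zero_mulVec]
  rw [sub_mul, one_mul, sub_eq_zero] at h
  exact h.symm

/-- Every projection entering a convex combination equal to `A` must fix `D`, so that `A - D` is a
combination of `r` projections of rank `j - m`. -/
lemma rank_sub_le_of_mem_partialConvexHull (hA : A ∈ partialConvexHull r (grassmannian 𝕜 ι j))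
    (hD : D ∈ grassmannian 𝕜 ι m) (hmj : m ≤ j) (hAD : A * D = D) :
    (A - D).rank ≤ r * (j - m) := by
  classical
  obtain ⟨P, hP, w, hw, rfl⟩ := mem_partialConvexHull_iff.1 hA
  have hsub : ∑ i, w i • (P i - D) = ∑ i, w i • P i - D := by
    simp only [smul_sub, sum_sub_distrib, ← sum_smul, hw.2, one_smul]
  have hone_sub : ∑ i, w i • (1 - P i) = 1 - ∑ i, w i • P i := by
    simp only [smul_sub, sum_sub_distrib, ← sum_smul, hw.2, one_smul]
  have hle : ∀ i, w i • (1 - P i) ≤ 1 - ∑ i, w i • P i := fun i => by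
    rw [← hone_sub]
    exact single_le_sum (f := fun i => w i • (1 - P i))
      (fun i _ => smul_nonneg (hw.1 i) (hP i).1.one_sub_nonneg) (mem_univ i)
  have hrank : ∀ i ∈ univ, (w i • (P i - D)).rank ≤ j - m := fun i _ => by
    rcases (hw.1 i).eq_or_lt with h0 | hpos
    · simp [← h0]
    · have hPD := mul_eq_of_smul_one_sub_le hpos (hP i).1.le_one (hle i) hAD
      rw [← rank_of_mem_grassmannian (sub_mem_grassmannian (hP i) hD hmj hPD)]
      exact rank_le_of_mulVec_eq_zero_imp fun v hv => by rw [smul_mulVec, hv, smul_zero]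
  rw [← hsub]
  refine (rank_sum_le _ _).trans ((sum_le_card_nsmul _ _ _ hrank).trans_eq ?_)
  rw [card_univ, Fintype.card_fin, smul_eq_mul]

/-- The witness has eigenvalues `1` (with multiplicity `j - 1`) and `1 / (n - j + 1)`. -/
lemma card_sub_add_one_le_of_fantope_subset [DecidableEq ι] (hj : 0 < j) (hjn : j ≤ Fintype.card ι)
    (h : fantope 𝕜 ι j ⊆ partialConvexHull r (grassmannian 𝕜 ι j)) :
    Fintype.card ι - j + 1 ≤ r := by
  obtain ⟨S, -, hS⟩ := exists_subset_card_eq (s := (univ : Finset ι)) (n := j - 1)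
    (by rw [card_univ]; omega)
  have hSc : #Sᶜ = Fintype.card ι - j + 1 := by rw [card_compl]; omega
  have hSc1 : (1 : ℝ) ≤ #Sᶜ := by rw [hSc]; simp
  set b : ι → ℝ := (S : Set ι).indicator 1 with hb
  set c : ι → ℝ := (S : Set ι)ᶜ.indicator fun _ => (#Sᶜ : ℝ)⁻¹ with hc
  have hsum : ∑ i, (b + c) i = j := by
    have hb' : ∑ i, b i = #S := by
      rw [hb, sum_indicator_subset _ (subset_univ S)]
      simp
    have hc' : ∑ i, c i = 1 := by
      rw [hc, ← coe_compl, sum_indicator_subset _ (subset_univ Sᶜ), sum_const, nsmul_eq_mul,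
        mul_inv_cancel₀ (zero_lt_one.trans_le hSc1).ne']
    simp only [Pi.add_apply]
    rw [sum_add_distrib, hb', hc', hS, Nat.cast_pred hj, sub_add_cancel]
  have hbc : realDiagonal 𝕜 (b + c) ∈ fantope 𝕜 ι j := by
    refine realDiagonal_mem_fantope_iff.2 ⟨⟨fun i => ?_, fun i => ?_⟩, hsum⟩ <;>
      by_cases hi : i ∈ S <;> simp [hb, hc, hi, inv_le_one_of_one_le₀ hSc1]
  have hfix : realDiagonal 𝕜 (b + c) * realDiagonal 𝕜 b = realDiagonal 𝕜 b := by
    rw [← map_mul]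
    congr 1
    ext i
    by_cases hi : i ∈ S <;> simp [hb, hc, hi]
  have hrank : (realDiagonal 𝕜 (b + c) - realDiagonal 𝕜 b).rank = #Sᶜ := by
    rw [← map_sub, add_sub_cancel_left, rank_realDiagonal]
    congr 1
    ext i
    by_cases hi : i ∈ S <;> simp [hc, hi, (zero_lt_one.trans_le hSc1).ne']
  have hle := rank_sub_le_of_mem_partialConvexHull (h hbc)
    (realDiagonal_indicator_mem_grassmannian S) (by omega) hfix
  rwa [hrank, hSc, hS, Nat.sub_sub_self hj, Nat.succ_eq_add_one, zero_add, mul_one] at hle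

theorem convex_partialConvexHull_grassmannian_iff (hj : 0 < j) (hjn : j < Fintype.card ι)
    (hr : 1 ≤ r) :
    Convex ℝ (partialConvexHull r (grassmannian 𝕜 ι j)) ↔ max j (Fintype.card ι - j) + 1 ≤ r := by
  classical
  rw [convex_partialConvexHull_iff hr, convexHull_grassmannian hjn.le]
  refine ⟨fun h => ?_, fun h =>
    (fantope_subset_partialConvexHull hjn.le).trans (partialConvexHull_mono h)⟩
  have h' : fantope 𝕜 ι (Fintype.card ι - j) ⊆
      partialConvexHull r (grassmannian 𝕜 ι (Fintype.card ι - j)) := fun A hA => by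
    have hA' := one_sub_mem_fantope (Nat.sub_le _ _) hA
    rw [Nat.sub_sub_self hjn.le] at hA'
    simpa using one_sub_mem_partialConvexHull_grassmannian hjn.le (h hA')
  have hle := card_sub_add_one_le_of_fantope_subset hj hjn.le h
  have hle' := card_sub_add_one_le_of_fantope_subset (Nat.sub_pos_of_lt hjn) (Nat.sub_le _ _) h'
  omega

end LowerBound

section CoadjointOrbit

lemma exists_perm_apply_eq_of_sum_eq {ι : Type*} [Fintype ι] {f g : ι → ℝ}
    (hf : ∀ i, f i = 0 ∨ f i = 1) (hg : ∀ i, g i = 0 ∨ g i = 1) (h : ∑ i, f i = ∑ i, g i) :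
    ∃ τ : Equiv.Perm ι, ∀ i, g (τ i) = f i := by
  classical
  have hcard : ∀ u : ι → ℝ, (∀ i, u i = 0 ∨ u i = 1) →
      ∑ i, u i = Fintype.card {i // u i = 1} := fun u hu => by
    rw [Fintype.card_subtype, ← sum_boole]
    refine sum_congr rfl fun i _ => ?_
    rcases hu i with hi | hi <;> simp [hi]
  rw [hcard f hf, hcard g hg, Nat.cast_inj] at h
  refine ⟨(Fintype.equivOfCardEq h).extendSubtype, fun i => ?_⟩
  by_cases hi : f i = 1
  · rw [hi]
    exact (Fintype.equivOfCardEq h).extendSubtype_mem i hi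
  · rw [(hf i).resolve_right hi]
    exact (hg _).resolve_right ((Fintype.equivOfCardEq h).extendSubtype_not_mem i hi)

lemma isStarProjection_add_smul_one_iff {𝕜 ι : Type*} [RCLike 𝕜] [Fintype ι] [DecidableEq ι]
    {A : Matrix ι ι 𝕜} (hA : A.IsHermitian) (c : ℝ) :
    IsStarProjection (A + c • 1) ↔ ∀ i, hA.eigenvalues i + c = 0 ∨ hA.eigenvalues i + c = 1 := by
  set φ := conjStarAlgAut 𝕜 _ hA.eigenvectorUnitary
  have hconj : φ (realDiagonal 𝕜 (hA.eigenvalues + c • 1)) = A + c • 1 := by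
    have hspec : φ (realDiagonal 𝕜 hA.eigenvalues) = A := hA.spectral_theorem.symm
    rw [map_add, map_smul, map_one, map_add, hspec, ← algebraMap_smul 𝕜 c, map_smul, map_one,
      algebraMap_smul]
  have hiff : IsStarProjection (A + c • 1) ↔
      IsStarProjection (realDiagonal 𝕜 (hA.eigenvalues + c • 1)) := by
    refine ⟨fun h => ?_, fun h => hconj ▸ h.map φ⟩
    simpa [← hconj] using h.map φ.symm
  simp only [hiff, isStarProjection_realDiagonal_iff, Pi.add_apply, Pi.smul_apply, Pi.one_apply,
    smul_eq_mul, mul_one]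

/-- The `j`-th fundamental weight `μ(n,j)` of `SU(n)`, as the list of eigenvalues of its coadjoint
orbit. -/
noncomputable def fundWeight (n j : ℕ) (i : Fin n) : ℝ :=
  if (i : ℕ) < j then 1 - (j : ℝ) / n else -((j : ℝ) / n)

variable {n j : ℕ} {A : Matrix (Fin n) (Fin n) ℂ}

lemma fundWeight_add_div (i : Fin n) :
    fundWeight n j i + (j : ℝ) / n = if (i : ℕ) < j then 1 else 0 := by
  unfold fundWeight
  split_ifs <;> ring

lemma sum_fundWeight_add_div (hj : j ≤ n) : ∑ i, (fundWeight n j i + (j : ℝ) / n) = j := by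
  simp only [fundWeight_add_div]
  rw [sum_boole, Fin.card_filter_val_lt, min_eq_right hj]

lemma trace_add_div_smul_one_eq_iff (hn : n ≠ 0) :
    (A + ((j : ℝ) / n) • 1).trace = j ↔ A.trace = 0 := by
  have hn' : (n : ℂ) ≠ 0 := Nat.cast_ne_zero.2 hn
  simp [trace_add, trace_smul, hn']

lemma sum_eigenvalues_add_div (hn : n ≠ 0) (hA : A.IsHermitian) (htr : A.trace = 0) :
    ∑ i, (hA.eigenvalues i + (j : ℝ) / n) = j := by
  have hsum : ∑ i, hA.eigenvalues i = 0 := by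
    rw [hA.trace_eq_sum_eigenvalues, ← RCLike.ofReal_sum] at htr
    exact RCLike.ofReal_eq_zero.1 htr
  rw [sum_add_distrib, hsum, sum_const, card_univ, Fintype.card_fin, nsmul_eq_mul, zero_add,
    mul_div_cancel₀ _ (Nat.cast_ne_zero.2 hn)]

lemma mem_coadjointOrbit_fundWeight_iff (hn : n ≠ 0) (hj : j ≤ n) :
    A ∈ coadjointOrbit (fundWeight n j) ↔
      A + ((j : ℝ) / n) • 1 ∈ grassmannian ℂ (Fin n) j := by
  have h01 : ∀ i, fundWeight n j i + (j : ℝ) / n = 0 ∨ fundWeight n j i + (j : ℝ) / n = 1 :=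
    fun i => by
      rw [fundWeight_add_div]
      exact (ite_eq_or_eq _ _ _).symm
  constructor
  · rintro ⟨htr, hA, τ, hτ⟩
    refine ⟨(isStarProjection_add_smul_one_iff hA _).2 fun i => ?_,
      (trace_add_div_smul_one_eq_iff hn).2 htr⟩
    rw [← τ.apply_symm_apply i, hτ]
    exact h01 _
  · rintro ⟨hP, htr⟩
    have hone : IsSelfAdjoint (((j : ℝ) / n) • (1 : Matrix (Fin n) (Fin n) ℂ)) :=
      (IsSelfAdjoint.all _).smul (.one _)
    have hA : A.IsHermitian :=
      (add_sub_cancel_right A _ ▸ hP.isSelfAdjoint.sub hone : IsSelfAdjoint A)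
    rw [trace_add_div_smul_one_eq_iff hn] at htr
    obtain ⟨τ, hτ⟩ := exists_perm_apply_eq_of_sum_eq h01
      ((isStarProjection_add_smul_one_iff hA _).1 hP)
      ((sum_fundWeight_add_div hj).trans (sum_eigenvalues_add_div hn hA htr).symm)
    exact ⟨htr, hA, τ, fun i => add_right_cancel (hτ i)⟩

open scoped Pointwise in
lemma coadjointOrbit_fundWeight_eq_vadd (hn : n ≠ 0) (hj : j ≤ n) :
    coadjointOrbit (fundWeight n j) =
      (-(((j : ℝ) / n) • 1 : Matrix (Fin n) (Fin n) ℂ)) +ᵥ grassmannian ℂ (Fin n) j := by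
  ext A
  rw [mem_coadjointOrbit_fundWeight_iff hn hj, Set.mem_vadd_set_iff_neg_vadd_mem, neg_neg,
    vadd_eq_add, add_comm]

theorem convex_partialConvexHull_coadjointOrbit_fundWeight_iff {r : ℕ} (hj : 0 < j) (hjn : j < n)
    (hr : 1 ≤ r) :
    Convex ℝ (partialConvexHull r (coadjointOrbit (fundWeight n j))) ↔ max j (n - j) + 1 ≤ r := by
  rw [coadjointOrbit_fundWeight_eq_vadd (Nat.ne_zero_of_lt hjn) hjn.le, partialConvexHull_vadd,
    convex_vadd, convex_partialConvexHull_grassmannian_iff hj (by rwa [Fintype.card_fin]) hr,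
    Fintype.card_fin]

end CoadjointOrbit

/-- For the `j`-th fundamental weight `μ(n,j)` of `SU(n)` (first `j` coordinates `1 - j/n`,
remaining coordinates `-j/n`), the minimal `r ≥ 1` such that `C_r(O_{μ(n,j)})` is convex
equals `n + 1 - min j (n - j)`. -/
theorem minR_convex_fundWeight (n j : ℕ) (hn : 2 ≤ n) (hj : 1 ≤ j) (hjn : j ≤ n - 1) :
    IsLeast {r : ℕ | 1 ≤ r ∧
        Convex ℝ (partialConvexHull r (coadjointOrbit
          (fun i : Fin n => if (i : ℕ) < j then 1 - (j : ℝ) / n else -((j : ℝ) / n))))}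
      (n + 1 - min j (n - j)) := by
  have hmin : n + 1 - min j (n - j) = max j (n - j) + 1 := by omega
  have hconvex := fun r => convex_partialConvexHull_coadjointOrbit_fundWeight_iff (n := n) (r := r)
    hj (by omega)
  rw [hmin]
  exact ⟨⟨Nat.le_add_left _ _, (hconvex _ (Nat.le_add_left _ _)).2 le_rfl⟩,
    fun r hr => (hconvex r hr.1).1 hr.2⟩
end
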